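/- Let n ≥ 2, let p be a prime, and let w = ∏_{k=1}^{m} g_{i_k}^{ε_k} and v = ∏_{q=1}^{l} g_{j_q}^{δ_q} be products of colored Burau generators and their inverses in GL(n,F) ⋊ S_n such that |i_k − j_q| > 1 for every k = 1,…,m and q = 1,…,l. Then w and v commute: w · v = v · w in GL(n,F) ⋊ S_n. -/

import Mathlib

/-- `F` : the field of fractions of the multivariate polynomial ring over `𝔽_p = ZMod p`
in variables `t_1, …, t_n` (0-indexed as `X 0, …, X (n-1)`). -/
noncomputable abbrev BurauField (n p : ℕ) : Type :=
  FractionRing (MvPolynomial (Fin n) (ZMod p))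

/-- The variable `t_i` (1-based index `i`, so `tvar n p (i-1)` is `t_i`) viewed inside
the fraction field. -/
noncomputable def tvar (n p : ℕ) (k : ℕ) : BurauField n p :=
  if h : k < n then
    algebraMap (MvPolynomial (Fin n) (ZMod p)) (BurauField n p) (MvPolynomial.X ⟨k, h⟩)
  else 0

/-- The colored Burau matrix `x_i(t)` (1-based index `i` with `1 ≤ i ≤ n-1`):
the identity matrix except for the `i`-th row, which has entries `t_i, -t_i, 1`
in columns `i-1, i, i+1` (with `-t_i` on the diagonal); for `i = 1` the first row
is `(-t_1, 1, 0, …, 0)`. -/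
noncomputable def colBurau (n p : ℕ) (i : ℕ) : Matrix (Fin n) (Fin n) (BurauField n p) :=
  Matrix.of fun r c =>
    if (r : ℕ) + 1 = i then
      if (c : ℕ) + 1 = i then -(tvar n p (i - 1))
      else if (c : ℕ) = i then 1
      else if (c : ℕ) + 2 = i then tvar n p (i - 1)
      else 0
    else if r = c then 1 else 0

/-- The action of a permutation `s ∈ S_n` on the fraction field, permuting the
variables `t_1, …, t_n`. -/
noncomputable def permF (n p : ℕ) (s : Equiv.Perm (Fin n)) : BurauField n p ≃+* BurauField n p :=
  IsFractionRing.ringEquivOfRingEquiv (MvPolynomial.renameEquiv (ZMod p) s).toRingEquiv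

/-!
The matrix `x_i(t)` differs from the identity only in row `i`, whose nonzero entries lie in
columns `i - 1, i, i + 1` and involve the single variable `t_i`. If `|i - j| > 1`, then row `i` of
`x_i(t)` vanishes in column `j` and row `j` of `x_j(t)` vanishes in column `i`, so the product in
either order is the identity with both rows replaced. Moreover `s_j` fixes `t_i` and `s_i` fixes
`t_j`, so neither matrix is changed by the permutation attached to the other, and
`g_i g_j = g_j g_i` reduces to the commutation of the matrices and of the disjoint transpositions.
Commutation then passes to products of integer powers.
-/

section Commute

lemma commute_prod_ofFn_zpow {G : Type*} [Group G] {m l : ℕ} {a : Fin m → G} {b : Fin l → G}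
    (ε : Fin m → ℤ) (δ : Fin l → ℤ) (h : ∀ k q, Commute (a k) (b q)) :
    Commute (List.ofFn fun k ↦ a k ^ ε k).prod (List.ofFn fun q ↦ b q ^ δ q).prod := by
  refine Commute.list_prod_left _ _ (List.forall_mem_ofFn_iff.2 fun k ↦ ?_)
  refine Commute.list_prod_right _ _ (List.forall_mem_ofFn_iff.2 fun q ↦ ?_)
  exact (h k q).zpow_zpow (ε k) (δ q)

lemma semidirectProduct_commute_of_fixed {N G : Type*} [Group N] [Group G] {φ : G →* MulAut N}
    {a b : N ⋊[φ] G} (hleft : Commute a.left b.left) (hright : Commute a.right b.right)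
    (hab : φ a.right b.left = b.left) (hba : φ b.right a.left = a.left) : Commute a b := by
  refine SemidirectProduct.ext ?_ hright
  simpa only [SemidirectProduct.mul_left, hab, hba] using hleft.eq

end Commute

section UpdateRow

variable {ι R : Type*} [Fintype ι] [DecidableEq ι]

lemma vecMul_updateRow_of_apply_eq_zero {κ : Type*} [NonUnitalNonAssocSemiring R]
    (A : Matrix ι κ R) {u : ι → R} {j : ι} (hu : u j = 0) (v : κ → R) :
    Matrix.vecMul u (A.updateRow j v) = Matrix.vecMul u A := by
  ext c
  refine Finset.sum_congr rfl fun k _ ↦ ?_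
  obtain rfl | hk := eq_or_ne k j
  · simp [hu]
  · simp [hk]

lemma updateRow_one_mul_updateRow_one [NonAssocSemiring R] {i j : ι} {u : ι → R} (hu : u j = 0)
    (v : ι → R) :
    (1 : Matrix ι ι R).updateRow i u * (1 : Matrix ι ι R).updateRow j v =
      ((1 : Matrix ι ι R).updateRow j v).updateRow i u := by
  rw [Matrix.updateRow_mul, vecMul_updateRow_of_apply_eq_zero 1 hu, Matrix.vecMul_one,
    Matrix.one_mul]

lemma commute_updateRow_one [NonAssocSemiring R] {i j : ι} (hij : i ≠ j) {u v : ι → R}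
    (hu : u j = 0) (hv : v i = 0) :
    Commute ((1 : Matrix ι ι R).updateRow i u) ((1 : Matrix ι ι R).updateRow j v) := by
  rw [Commute, SemiconjBy, updateRow_one_mul_updateRow_one hu, updateRow_one_mul_updateRow_one hv,
    Matrix.updateRow_comm _ hij]

end UpdateRow

section ColoredBurau

variable {n p : ℕ}

lemma permF_tvar (s : Equiv.Perm (Fin n)) (k : Fin n) :
    permF n p s (tvar n p k) = tvar n p (s k) := by
  simp [permF, tvar]

lemma colBurau_map_permF {s : Equiv.Perm (Fin n)} {k : Fin n} (hk : s k = k) :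
    (colBurau n p (k + 1)).map (permF n p s) = colBurau n p (k + 1) := by
  have ht : permF n p s (tvar n p k) = tvar n p k := by rw [permF_tvar, hk]
  ext r c
  simp only [colBurau, Matrix.map_apply, Matrix.of_apply, Nat.add_sub_cancel]
  split_ifs <;> simp [ht]

lemma colBurau_eq_updateRow (k : Fin n) :
    colBurau n p (k + 1) = (1 : Matrix (Fin n) (Fin n) _).updateRow k (colBurau n p (k + 1) k) := by
  ext r c
  obtain rfl | hr := eq_or_ne r k
  · simp
  · simp [colBurau, Matrix.one_apply, hr, Fin.val_inj]

lemma colBurau_apply_eq_zero_of_distant (i : ℕ) {r c : Fin n} (hrc : 1 < ((r : ℤ) - c).natAbs) :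
    colBurau n p i r c = 0 := by
  have hne : r ≠ c := by rintro rfl; simp at hrc
  simp only [colBurau, Matrix.of_apply]
  split_ifs <;> first | rfl | omega

lemma colBurau_commute {a b : Fin n} (hab : 1 < ((a : ℤ) - b).natAbs) :
    Commute (colBurau n p (a + 1)) (colBurau n p (b + 1)) := by
  have hne : a ≠ b := by rintro rfl; simp at hab
  rw [colBurau_eq_updateRow a, colBurau_eq_updateRow b]
  exact commute_updateRow_one hne (colBurau_apply_eq_zero_of_distant _ hab)
    (colBurau_apply_eq_zero_of_distant _ (by omega))

end ColoredBurau

section Generators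

variable {n p : ℕ}

/-- `φ` is the action of `S_n` on `GL(n,F)` that permutes the variables in every matrix entry. -/
def PermutesVariables
    (φ : Equiv.Perm (Fin n) →* MulAut (GL (Fin n) (BurauField n p))) : Prop :=
  ∀ (s : Equiv.Perm (Fin n)) (m : GL (Fin n) (BurauField n p)),
    (φ s m : Matrix (Fin n) (Fin n) (BurauField n p)) =
      (m : Matrix (Fin n) (Fin n) (BurauField n p)).map (permF n p s)

/-- `x` lifts the colored Burau matrices `x_1(t), …, x_{n-1}(t)` to `GL(n,F)`; its values at
indices outside `1, …, n - 1` are arbitrary. -/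
def RealizesColBurau (x : ℕ → GL (Fin n) (BurauField n p)) : Prop :=
  ∀ i, 1 ≤ i → i ≤ n - 1 →
    (x i : Matrix (Fin n) (Fin n) (BurauField n p)) = colBurau n p i

lemma exists_fin_add_one_eq {i : ℕ} (hi : 1 ≤ i ∧ i ≤ n - 1) : ∃ k : Fin n, (k : ℕ) + 1 = i :=
  ⟨⟨i - 1, by omega⟩, Nat.sub_add_cancel hi.1⟩

variable {φ : Equiv.Perm (Fin n) →* MulAut (GL (Fin n) (BurauField n p))}
  {x : ℕ → GL (Fin n) (BurauField n p)}

variable (φ x) in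
/-- The colored Burau generator `g_i = (x_i(t), s_i)` of `GL(n,F) ⋊ S_n`, with the 1-based index
`i` of the paper; `x i` stands for `x_i(t)` regarded as an element of `GL(n,F)`. -/
def colBurauGenerator {i : ℕ} (hi : 1 ≤ i ∧ i ≤ n - 1) :
    GL (Fin n) (BurauField n p) ⋊[φ] Equiv.Perm (Fin n) :=
  ⟨x i, Equiv.swap ⟨i - 1, by omega⟩ ⟨i, by omega⟩⟩

lemma coe_colBurauGenerator_left (hx : RealizesColBurau x) {i : ℕ} (hi : 1 ≤ i ∧ i ≤ n - 1) :
    ((colBurauGenerator φ x hi).left : Matrix (Fin n) (Fin n) (BurauField n p)) =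
      colBurau n p i :=
  hx i hi.1 hi.2

lemma colBurauGenerator_right_apply {i : ℕ} (hi : 1 ≤ i ∧ i ≤ n - 1) {k : Fin n}
    (hk : (k : ℕ) ≠ i - 1) (hk' : (k : ℕ) ≠ i) : (colBurauGenerator φ x hi).right k = k :=
  Equiv.swap_apply_of_ne_of_ne (Fin.ne_of_val_ne hk) (Fin.ne_of_val_ne hk')

lemma colBurauGenerator_left_fixed
    (hφ : PermutesVariables φ) (hx : RealizesColBurau x) {i j : ℕ}
    (hi : 1 ≤ i ∧ i ≤ n - 1) (hj : 1 ≤ j ∧ j ≤ n - 1)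
    (hij : 1 < ((i : ℤ) - j).natAbs) :
    φ (colBurauGenerator φ x hi).right (colBurauGenerator φ x hj).left =
      (colBurauGenerator φ x hj).left := by
  obtain ⟨k, rfl⟩ := exists_fin_add_one_eq hj
  have hk : (colBurauGenerator φ x hi).right k = k :=
    colBurauGenerator_right_apply hi (by omega) (by omega)
  apply Units.ext
  rw [hφ _ _, coe_colBurauGenerator_left hx hj]
  exact colBurau_map_permF hk

lemma colBurauGenerator_left_commute
    (hx : RealizesColBurau x) {i j : ℕ} (hi : 1 ≤ i ∧ i ≤ n - 1) (hj : 1 ≤ j ∧ j ≤ n - 1)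
    (hij : 1 < ((i : ℤ) - j).natAbs) :
    Commute (colBurauGenerator φ x hi).left (colBurauGenerator φ x hj).left := by
  obtain ⟨a, rfl⟩ := exists_fin_add_one_eq hi
  obtain ⟨b, rfl⟩ := exists_fin_add_one_eq hj
  rw [← Commute.units_val_iff, coe_colBurauGenerator_left hx hi, coe_colBurauGenerator_left hx hj]
  exact colBurau_commute (by omega)

lemma colBurauGenerator_right_commute {i j : ℕ} (hi : 1 ≤ i ∧ i ≤ n - 1)
    (hj : 1 ≤ j ∧ j ≤ n - 1) (hij : 1 < ((i : ℤ) - j).natAbs) :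
    Commute (colBurauGenerator φ x hi).right (colBurauGenerator φ x hj).right := by
  refine (Equiv.Perm.disjoint_swap_swap ?_).commute
  simp only [List.nodup_cons, List.mem_cons, Fin.mk.injEq, List.not_mem_nil, List.nodup_nil,
    or_false, not_false_eq_true, and_true]
  omega

lemma colBurauGenerator_commute
    (hφ : PermutesVariables φ) (hx : RealizesColBurau x) {i j : ℕ}
    (hi : 1 ≤ i ∧ i ≤ n - 1) (hj : 1 ≤ j ∧ j ≤ n - 1)
    (hij : 1 < ((i : ℤ) - j).natAbs) :
    Commute (colBurauGenerator φ x hi) (colBurauGenerator φ x hj) :=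
  semidirectProduct_commute_of_fixed (colBurauGenerator_left_commute hx hi hj hij)
    (colBurauGenerator_right_commute hi hj hij)
    (colBurauGenerator_left_fixed hφ hx hi hj hij)
    (colBurauGenerator_left_fixed hφ hx hj hi (by omega))

theorem colored_burau_distant_products_commute_general
    (hφ : PermutesVariables φ) (hx : RealizesColBurau x) {m l : ℕ} {I : Fin m → ℕ} {J : Fin l → ℕ}
    (hI : ∀ k, 1 ≤ I k ∧ I k ≤ n - 1) (hJ : ∀ q, 1 ≤ J q ∧ J q ≤ n - 1)
    (ε : Fin m → ℤ) (δ : Fin l → ℤ)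
    (hIJ : ∀ k q, 1 < ((I k : ℤ) - (J q : ℤ)).natAbs) :
    Commute (List.ofFn fun k ↦ colBurauGenerator φ x (hI k) ^ ε k).prod
      (List.ofFn fun q ↦ colBurauGenerator φ x (hJ q) ^ δ q).prod :=
  commute_prod_ofFn_zpow ε δ fun k q ↦ colBurauGenerator_commute hφ hx (hI k) (hJ q) (hIJ k q)

end Generators

/-- Let `w = ∏_{k=1}^m g_{i_k}^{ε_k}` and `v = ∏_{q=1}^l g_{j_q}^{δ_q}` be products of
colored Burau generators `g_i = (x_i(t), s_i)` and their inverses in `GL(n,F) ⋊ S_n`,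
with `|i_k - j_q| > 1` for all `k, q`.  Then `w · v = v · w`.
Here `φ` is the action of `S_n` on `GL(n,F)` induced by permuting the variables
(characterized entrywise by `hφ`), `x i ∈ GL(n,F)` is the colored Burau matrix
(characterized by `hx`), and `s_i` is the transposition `(i, i+1)`
(0-indexed: `Equiv.swap ⟨i-1,_⟩ ⟨i,_⟩`). -/
theorem colored_burau_distant_products_commute (n p : ℕ) (hn : 2 ≤ n) (hp : p.Prime)
    (φ : Equiv.Perm (Fin n) →* MulAut (GL (Fin n) (BurauField n p)))
    (hφ : ∀ (s : Equiv.Perm (Fin n)) (m : GL (Fin n) (BurauField n p)),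
      ((φ s m : Matrix (Fin n) (Fin n) (BurauField n p)) =
        (m : Matrix (Fin n) (Fin n) (BurauField n p)).map (permF n p s)))
    (x : ℕ → GL (Fin n) (BurauField n p))
    (hx : ∀ i, 1 ≤ i → i ≤ n - 1 →
      ((x i : Matrix (Fin n) (Fin n) (BurauField n p)) = colBurau n p i))
    (m l : ℕ) (I : Fin m → ℕ) (J : Fin l → ℕ)
    (hI : ∀ k, 1 ≤ I k ∧ I k ≤ n - 1) (hJ : ∀ q, 1 ≤ J q ∧ J q ≤ n - 1)
    (ε : Fin m → ℤ) (hε : ∀ k, ε k = 1 ∨ ε k = -1)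
    (δ : Fin l → ℤ) (hδ : ∀ q, δ q = 1 ∨ δ q = -1)
    (hIJ : ∀ k q, 1 < ((I k : ℤ) - (J q : ℤ)).natAbs) :
    (List.ofFn fun k : Fin m =>
        ((⟨x (I k), Equiv.swap ⟨I k - 1, by have := hI k; omega⟩
            ⟨I k, by have := hI k; omega⟩⟩ :
          GL (Fin n) (BurauField n p) ⋊[φ] Equiv.Perm (Fin n)) ^ (ε k))).prod *
      (List.ofFn fun q : Fin l =>
        ((⟨x (J q), Equiv.swap ⟨J q - 1, by have := hJ q; omega⟩
            ⟨J q, by have := hJ q; omega⟩⟩ :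
          GL (Fin n) (BurauField n p) ⋊[φ] Equiv.Perm (Fin n)) ^ (δ q))).prod =
    (List.ofFn fun q : Fin l =>
        ((⟨x (J q), Equiv.swap ⟨J q - 1, by have := hJ q; omega⟩
            ⟨J q, by have := hJ q; omega⟩⟩ :
          GL (Fin n) (BurauField n p) ⋊[φ] Equiv.Perm (Fin n)) ^ (δ q))).prod *
      (List.ofFn fun k : Fin m =>
        ((⟨x (I k), Equiv.swap ⟨I k - 1, by have := hI k; omega⟩
            ⟨I k, by have := hI k; omega⟩⟩ :
          GL (Fin n) (BurauField n p) ⋊[φ] Equiv.Perm (Fin n)) ^ (ε k))).prod := by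
  exact colored_burau_distant_products_commute_general hφ hx hI hJ ε δ hIJ
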